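/- The explainer L_w satisfies Feasibility, Validity, Success, Coherence, Monotonicity, Counter-Monotonicity and Strong Completeness, and it violates Irreducibility, Strong Irreducibility and Completeness. -/

import Mathlib

/-- A classification theory: a finite set of features, a finite domain (with at
least two values) for each feature, and a finite set of at least two classes. -/
structure CTheory where
  F : Finset ℕ
  dom : ℕ → Finset ℕ
  dom_nontrivial : ∀ f ∈ F, 1 < (dom f).card
  C : Finset ℕ
  C_nontrivial : 2 ≤ C.card

/-- A literal of a theory is a pair (feature, value) with the value in the
feature's domain. -/
def IsLiteral (T : CTheory) (l : ℕ × ℕ) : Prop :=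
  l.1 ∈ T.F ∧ l.2 ∈ T.dom l.1

/-- A set of literals is consistent iff no feature gets two distinct values. -/
def ConsistentLits (S : Set (ℕ × ℕ)) : Prop :=
  ∀ l ∈ S, ∀ l' ∈ S, l.1 = l'.1 → l.2 = l'.2

/-- A partial assignment: a consistent set of literals (each feature occurs at
most once). -/
def IsPartialAssignment (T : CTheory) (E : Set (ℕ × ℕ)) : Prop :=
  (∀ l ∈ E, IsLiteral T l) ∧ ConsistentLits E

/-- An instance: a partial assignment in which every feature occurs (exactly) once. -/
def IsInstance (T : CTheory) (x : Set (ℕ × ℕ)) : Prop :=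
  IsPartialAssignment T x ∧ ∀ f ∈ T.F, ∃ v, (f, v) ∈ x

/-- The feature space of a theory: the set of all its instances. -/
def FeatureSpace (T : CTheory) : Set (Set (ℕ × ℕ)) := {x | IsInstance T x}

/-- A classifier maps every instance to a class. -/
def IsClassifier (T : CTheory) (κ : Set (ℕ × ℕ) → ℕ) : Prop :=
  ∀ x ∈ FeatureSpace T, κ x ∈ T.C

/-- A question (T, κ, D, x): κ is a classifier on T, D ⊆ F(T) and x ∈ D. -/
def IsQuestion (T : CTheory) (κ : Set (ℕ × ℕ) → ℕ)
    (D : Set (Set (ℕ × ℕ))) (x : Set (ℕ × ℕ)) : Prop :=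
  IsClassifier T κ ∧ D ⊆ FeatureSpace T ∧ x ∈ D

/-- An explainer maps every question (T, κ, D, x) to a set of sets of literals. -/
abbrev Explainer :=
  CTheory → (Set (ℕ × ℕ) → ℕ) → Set (Set (ℕ × ℕ)) → Set (ℕ × ℕ) → Set (Set (ℕ × ℕ))

/-- An explainer returns, on every question over T, a subset of E(T)
(the partial assignments of T). -/
def IsExplainer (L : Explainer) : Prop :=
  ∀ T κ D x, IsQuestion T κ D x → ∀ E ∈ L T κ D x, IsPartialAssignment T E

/-- Feasibility: every explanation is part of the instance being explained. -/
def Feasibility (L : Explainer) : Prop :=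
  ∀ T κ D x, IsQuestion T κ D x → ∀ E ∈ L T κ D x, E ⊆ x

/-- Validity: no explanation is contradicted within the dataset. -/
def Validity (L : Explainer) : Prop :=
  ∀ T κ D x, IsQuestion T κ D x → ∀ E ∈ L T κ D x,
    ¬ ∃ y ∈ D, E ⊆ y ∧ κ y ≠ κ x

/-- Success: every question receives at least one explanation. -/
def Success (L : Explainer) : Prop :=
  ∀ T κ D x, IsQuestion T κ D x → (L T κ D x).Nonempty

/-- Coherence: explanations of instances with distinct classes are jointly
inconsistent. -/
def Coherence (L : Explainer) : Prop :=
  ∀ T κ D x x', IsQuestion T κ D x → IsQuestion T κ D x' → κ x ≠ κ x' →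
    ∀ E ∈ L T κ D x, ∀ E' ∈ L T κ D x', ¬ ConsistentLits (E ∪ E')

/-- Irreducibility: no literal of an explanation can be removed
(witnessed in the dataset). -/
def Irreducibility (L : Explainer) : Prop :=
  ∀ T κ D x, IsQuestion T κ D x → ∀ E ∈ L T κ D x, ∀ l ∈ E,
    ∃ x' ∈ D, κ x' ≠ κ x ∧ E \ {l} ⊆ x'

/-- Strong Irreducibility: no literal of an explanation can be removed
(witnessed in the feature space). -/
def StrongIrreducibility (L : Explainer) : Prop :=
  ∀ T κ D x, IsQuestion T κ D x → ∀ E ∈ L T κ D x, ∀ l ∈ E,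
    ∃ x' ∈ FeatureSpace T, κ x' ≠ κ x ∧ E \ {l} ⊆ x'

/-- Completeness: every omitted candidate is invalidated within the dataset. -/
def Completeness (L : Explainer) : Prop :=
  ∀ T κ D x, IsQuestion T κ D x → ∀ E ⊆ x, E ∉ L T κ D x →
    ∃ y ∈ D, E ⊆ y ∧ κ y ≠ κ x

/-- Strong Completeness: every omitted candidate is invalidated within the
feature space. -/
def StrongCompleteness (L : Explainer) : Prop :=
  ∀ T κ D x, IsQuestion T κ D x → ∀ E ⊆ x, E ∉ L T κ D x →
    ∃ y ∈ FeatureSpace T, E ⊆ y ∧ κ y ≠ κ x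

/-- Monotonicity: enlarging the dataset preserves explanations. -/
def Monotonicity (L : Explainer) : Prop :=
  ∀ T κ D D' x, IsQuestion T κ D x → IsQuestion T κ D' x → D ⊆ D' →
    L T κ D x ⊆ L T κ D' x

/-- Counter-Monotonicity: enlarging the dataset can only discard explanations. -/
def CounterMonotonicity (L : Explainer) : Prop :=
  ∀ T κ D D' x, IsQuestion T κ D x → IsQuestion T κ D' x → D ⊆ D' →
    L T κ D' x ⊆ L T κ D x

/-- The explainer L_dw returning all weak abductive explanations (dwAXp's):
E ⊆ x and every y ∈ D containing E has the same class as x. -/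
def Ldw : Explainer := fun _T κ D x =>
  {E | E ⊆ x ∧ ∀ y ∈ D, E ⊆ y → κ y = κ x}

/-- The explainer L_w returning the weak abductive explanations computed on the
whole feature space. -/
def Lw : Explainer := fun T κ _D x => Ldw T κ (FeatureSpace T) x

/-- The explainer L_dc returning the subset-minimal weak abductive explanations
(concise abductive explanations). -/
def Ldc : Explainer := fun T κ D x =>
  {E | E ∈ Ldw T κ D x ∧ ∀ E' ∈ Ldw T κ D x, E' ⊆ E → E' = E}

/-- A set X of partial assignments is coherent under (D, κ): no two of its
members are consistent together while being contained in instances of D with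
distinct classes. -/
def CoherentSet (κ : Set (ℕ × ℕ) → ℕ) (D : Set (Set (ℕ × ℕ)))
    (X : Set (Set (ℕ × ℕ))) : Prop :=
  ¬ ∃ E ∈ X, ∃ E' ∈ X, ConsistentLits (E ∪ E') ∧
      ∃ y ∈ D, ∃ z ∈ D, E ⊆ y ∧ E' ⊆ z ∧ κ y ≠ κ z

/-- An envelope under (D, κ): a coherent set of dwAXp's covering every instance
of D. -/
def IsEnvelope (T : CTheory) (κ : Set (ℕ × ℕ) → ℕ) (D : Set (Set (ℕ × ℕ)))
    (X : Set (Set (ℕ × ℕ))) : Prop :=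
  (∀ E ∈ X, IsPartialAssignment T E) ∧
  CoherentSet κ D X ∧
  (∀ E ∈ X, ∃ x ∈ D, E ∈ Ldw T κ D x) ∧
  (∀ x ∈ D, ∃ E ∈ X, E ⊆ x)

/-- W: the union of all dwAXp's of all instances of the dataset. -/
def dwUnion (T : CTheory) (κ : Set (ℕ × ℕ) → ℕ) (D : Set (Set (ℕ × ℕ))) :
    Set (Set (ℕ × ℕ)) :=
  {E | ∃ x ∈ D, E ∈ Ldw T κ D x}

/-- The two defining conditions of an irrefutable envelope (before maximality):
a set of dwAXp's none of which conflicts with any dwAXp. -/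
def IrrCandidate (T : CTheory) (κ : Set (ℕ × ℕ) → ℕ) (D : Set (Set (ℕ × ℕ)))
    (X : Set (Set (ℕ × ℕ))) : Prop :=
  X ⊆ dwUnion T κ D ∧
  ∀ E ∈ X, ¬ ∃ E' ∈ dwUnion T κ D, ¬ CoherentSet κ D {E, E'}

/-- An irrefutable envelope under (D, κ): a subset-maximal set of mutually
irrefutable dwAXp's. -/
def IsIrrefutableEnvelope (T : CTheory) (κ : Set (ℕ × ℕ) → ℕ)
    (D : Set (Set (ℕ × ℕ))) (X : Set (Set (ℕ × ℕ))) : Prop :=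
  IrrCandidate T κ D X ∧ ∀ X', IrrCandidate T κ D X' → ¬ X ⊂ X'

/-- A coherent explainer: on every question, it returns the members of a fixed
envelope (the union of its outputs over the dataset) included in the instance. -/
def IsCoherentExplainer (L : Explainer) : Prop :=
  ∀ T κ D x, IsQuestion T κ D x →
    L T κ D x = {E | (∃ z ∈ D, E ∈ L T κ D z) ∧ E ⊆ x} ∧
    IsEnvelope T κ D {E | ∃ z ∈ D, E ∈ L T κ D z}

lemma inst_eq {T : CTheory} {x y : Set (ℕ × ℕ)} (hx : x ∈ FeatureSpace T)
    (hy : y ∈ FeatureSpace T) (h : x ⊆ y) : y = x := by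
  apply Set.Subset.antisymm _ h
  rintro ⟨f, v⟩ hl
  obtain ⟨w, hw⟩ := hx.2 f (hy.1.1 _ hl).1
  have := hy.1.2 _ hl _ (h hw) rfl
  simp only at this
  rw [this]; exact hw

lemma exists_inst {T : CTheory} {x S : Set (ℕ × ℕ)} (hx : x ∈ FeatureSpace T)
    (hS : IsPartialAssignment T S) : ∃ z ∈ FeatureSpace T, S ⊆ z := by
  refine ⟨S ∪ {l | l ∈ x ∧ ∀ v, (l.1, v) ∉ S}, ⟨⟨?_, ?_⟩, ?_⟩, Set.subset_union_left⟩
  · rintro l (h | h)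
    · exact hS.1 l h
    · exact hx.1.1 l h.1
  · rintro ⟨f, v⟩ (h | h) ⟨f', v'⟩ (h' | h') e
    · exact hS.2 _ h _ h' e
    · simp only at e
      subst e
      exact absurd h (h'.2 _)
    · simp only at e
      subst e
      exact absurd h' (h.2 _)
    · exact hx.1.2 _ h.1 _ h'.1 e
  · intro f hf
    by_cases h : ∃ v, (f, v) ∈ S
    · obtain ⟨v, hv⟩ := h
      exact ⟨v, Or.inl hv⟩
    · push Not at h
      obtain ⟨v, hv⟩ := hx.2 f hf
      exact ⟨v, Or.inr ⟨hv, h⟩⟩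

def exT : CTheory where
  F := {0}
  dom := fun _ => {0, 1}
  dom_nontrivial := by intros; decide
  C := {0, 1}
  C_nontrivial := by decide

lemma exT_inst (v : ℕ) (hv : v = 0 ∨ v = 1) : ({(0, v)} : Set (ℕ × ℕ)) ∈ FeatureSpace exT := by
  refine ⟨⟨?_, ?_⟩, ?_⟩
  · rintro l rfl
    exact ⟨by simp [exT], by simpa [exT] using hv⟩
  · rintro l rfl l' rfl _
    rfl
  · intro f hf
    have : f = 0 := by simpa [exT] using hf
    exact ⟨v, by simp [this]⟩

theorem Lw_axioms :
    Feasibility Lw ∧ Validity Lw ∧ Success Lw ∧ Coherence Lw ∧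
    Monotonicity Lw ∧ CounterMonotonicity Lw ∧ StrongCompleteness Lw ∧
    ¬ Irreducibility Lw ∧ ¬ StrongIrreducibility Lw ∧ ¬ Completeness Lw := by
  refine ⟨?_, ?_, ?_, ?_, ?_, ?_, ?_, ?_, ?_, ?_⟩
  · intro T κ D x _ E hE
    exact hE.1
  · rintro T κ D x hQ E hE ⟨y, hy, hEy, hne⟩
    exact hne (hE.2 y (hQ.2.1 hy) hEy)
  · intro T κ D x hQ
    exact ⟨x, subset_rfl, fun y hy h => by rw [inst_eq (hQ.2.1 hQ.2.2) hy h]⟩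
  · intro T κ D x x' hQ hQ' hne E hE E' hE' hc
    have hx := hQ.2.1 hQ.2.2
    have hx' := hQ'.2.1 hQ'.2.2
    obtain ⟨z, hz, hs⟩ := exists_inst hx (S := E ∪ E') ⟨by
      rintro l (h | h)
      · exact hx.1.1 l (hE.1 h)
      · exact hx'.1.1 l (hE'.1 h), hc⟩
    exact hne ((hE.2 z hz (Set.subset_union_left.trans hs)).symm.trans
      (hE'.2 z hz (Set.subset_union_right.trans hs)))
  · intro T κ D D' x _ _ _ E hE
    exact hE
  · intro T κ D D' x _ _ _ E hE
    exact hE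
  · intro T κ D x hQ E hE hn
    by_contra hc
    push Not at hc
    exact hn ⟨hE, hc⟩
  · intro h
    obtain ⟨_, _, hne, _⟩ := h exT (fun _ => 0) (FeatureSpace exT) {(0, 0)}
      ⟨fun _ _ => by simp [exT], subset_rfl, exT_inst 0 (Or.inl rfl)⟩ {(0, 0)}
      ⟨subset_rfl, fun _ _ _ => rfl⟩ (0, 0) rfl
    exact hne rfl
  · intro h
    obtain ⟨_, _, hne, _⟩ := h exT (fun _ => 0) (FeatureSpace exT) {(0, 0)}
      ⟨fun _ _ => by simp [exT], subset_rfl, exT_inst 0 (Or.inl rfl)⟩ {(0, 0)}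
      ⟨subset_rfl, fun _ _ _ => rfl⟩ (0, 0) rfl
    exact hne rfl
  · intro h
    classical
    obtain ⟨y, hy, _, hne⟩ := h exT (fun y => if (0, 0) ∈ y then 0 else 1) {{(0, 0)}} {(0, 0)}
      ⟨fun y _ => by by_cases hh : ((0, 0) : ℕ × ℕ) ∈ y <;> simp [exT, hh],
        by rintro _ rfl; exact exT_inst 0 (Or.inl rfl), rfl⟩ ∅ (Set.empty_subset _)
      (fun hE => by
        have := hE.2 {(0, 1)} (exT_inst 1 (Or.inr rfl)) (Set.empty_subset _)
        simp at this)
    rw [Set.mem_singleton_iff] at hy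
    subst hy
    exact hne rfl
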